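/- Let m ≥ 1, n ≥ 1 be integers and μ ∈ ℝ. Then the rational function w_{m,n}(z; μ) = T_{m−1,n}^{(μ)}(z) · T_{m−1,n+1}^{(μ)}(z) / (T_{m,n}^{(μ)}(z) · T_{m−2,n+1}^{(μ)}(z)) is a solution of P_V with parameters α = m²/2, β = −(m+2n+1+μ)²/2, γ = μ. -/

import Mathlib

noncomputable section

open Finset

/-- Generalized binomial coefficient `C(x, k)` for real `x`. -/
def genBinom (x : ℝ) (k : ℕ) : ℝ :=
  (∏ i ∈ Finset.range k, (x - i)) / (Nat.factorial k)

/-- Associated Laguerre polynomial `L_n^{(α)}(z)`, with the convention `L_n^{(α)} = 0` for `n < 0`. -/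
def lagL (n : ℤ) (α : ℝ) : ℝ → ℝ := fun z =>
  if n < 0 then 0
  else ∑ k ∈ Finset.range (n.toNat + 1),
    (-1 : ℝ) ^ k * genBinom ((n : ℝ) + α) (n.toNat - k) * z ^ k / (Nat.factorial k)

/-- Generalised Laguerre polynomial
`T_{m,n}^{(μ)}(z) = det[(d/dz)^{j+k} L_{m+n}^{(μ+1)}(z)]_{j,k=0}^{n-1}`
(with `T_{m,0}^{(μ)} = 1`, the empty determinant). -/
def genLag (m : ℤ) (n : ℕ) (μ : ℝ) : ℝ → ℝ := fun z =>
  Matrix.det (Matrix.of fun j k : Fin n =>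
    iteratedDeriv ((j : ℕ) + (k : ℕ)) (lagL (m + n) (μ + 1)) z)

/-- Wronskian `Wr(f_1, …, f_r)(z) = det[(d/dz)^{j-1} f_k(z)]`. -/
def wronskian {r : ℕ} (f : Fin r → ℝ → ℝ) : ℝ → ℝ := fun z =>
  Matrix.det (Matrix.of fun j k : Fin r => iteratedDeriv (j : ℕ) (f k) z)

/-- The constant `c_{m,n} = (-1)^{n(2m+1+n)/2} ∏_{j=1}^n (j-1)!/(m+j)!`. -/
def cmn (m n : ℕ) : ℝ :=
  (-1 : ℝ) ^ (n * (2 * m + 1 + n) / 2) *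
    ∏ j ∈ Finset.range n, (Nat.factorial j : ℝ) / (Nat.factorial (m + j + 1))

/-- `τ_{m,n}^{(μ)}(z) = det[(z d/dz)^{j+k} L_{m+n}^{(n+μ)}(z)]_{j,k=0}^{n-1}`. -/
def tauP (m : ℤ) (n : ℕ) (μ : ℝ) : ℝ → ℝ := fun z =>
  Matrix.det (Matrix.of fun j k : Fin n =>
    ((fun (g : ℝ → ℝ) => fun t => t * deriv g t)^[(j : ℕ) + (k : ℕ)]
      (lagL (m + n) ((n : ℝ) + μ))) z)

/-- Hirota bilinear operator `D_z(f • g) = f' g - f g'`. -/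
def hirota (f g : ℝ → ℝ) (z : ℝ) : ℝ := deriv f z * g z - f z * deriv g z

/-- Probabilists' Hermite polynomial `He_n` as a real function. -/
def He (n : ℕ) : ℝ → ℝ := fun z => Polynomial.aeval z (Polynomial.hermite n)

/-- The fifth Painlevé equation (with `δ = -1/2`) for `w` with parameters `(a, b, c)`,
holding at the point `z`. -/
def PV (a b c : ℝ) (w : ℝ → ℝ) (z : ℝ) : Prop :=
  iteratedDeriv 2 w z =
    (1 / (2 * w z) + 1 / (w z - 1)) * (deriv w z) ^ 2
      - (1 / z) * deriv w z
      + (w z - 1) ^ 2 * (a * (w z) ^ 2 + b) / (z ^ 2 * w z)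
      + c * w z / z
      - w z * (w z + 1) / (2 * (w z - 1))

/-- The Jimbo–Miwa–Okamoto `σ`-equation `S_V` with parameters `(ν₁, ν₂, ν₃)`,
holding at the point `z`. -/
def SV (ν₁ ν₂ ν₃ : ℝ) (σ : ℝ → ℝ) (z : ℝ) : Prop :=
  (z * iteratedDeriv 2 σ z) ^ 2 =
    (2 * (deriv σ z) ^ 2 + (ν₁ + ν₂ + ν₃ - z) * deriv σ z + σ z) ^ 2
      - 4 * deriv σ z * (deriv σ z + ν₁) * (deriv σ z + ν₂) * (deriv σ z + ν₃)

open Polynomial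

theorem derivative_det_col {n : ℕ} (M : Matrix (Fin n) (Fin n) ℝ[X]) :
    derivative M.det = ∑ j, (M.updateCol j (fun i => derivative (M i j))).det := by
  simp only [Matrix.det_apply', derivative_sum, derivative_mul]
  rw [Finset.sum_comm]
  refine Finset.sum_congr rfl fun σ _ => ?_
  rw [derivative_intCast, zero_mul, zero_add, derivative_prod_finset, Finset.mul_sum]
  refine Finset.sum_congr rfl fun j _ => ?_
  rw [← Finset.prod_erase_mul _ _ (Finset.mem_univ j)]
  congr 1
  congr 1
  · refine Finset.prod_congr rfl fun i hi => ?_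
    rw [Matrix.updateCol_ne (Finset.ne_of_mem_erase hi)]
  · rw [Matrix.updateCol_self]

/-- index sequence `0, 1, …, p-1, e`. -/
def idx (p e : ℕ) (i : Fin (p + 1)) : ℕ := if (i : ℕ) = p then e else i

/-- Bordered Hankel minors. -/
def bord {R : Type*} [CommRing R] (h : ℕ → R) (p e₁ e₂ : ℕ) : R :=
  Matrix.det (Matrix.of fun i j : Fin (p + 1) => h (idx p e₁ i + idx p e₂ j))

def hank {R : Type*} [CommRing R] (h : ℕ → R) (n : ℕ) : R :=
  Matrix.det (Matrix.of fun i j : Fin n => h ((i : ℕ) + (j : ℕ)))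

theorem bord_symm {R : Type*} [CommRing R] (h : ℕ → R) (p e₁ e₂ : ℕ) :
    bord h p e₁ e₂ = bord h p e₂ e₁ := by
  unfold bord
  rw [← Matrix.det_transpose]
  congr 1
  ext i j
  simp [add_comm]

theorem hank_eq_bord {R : Type*} [CommRing R] (h : ℕ → R) (p : ℕ) :
    hank h (p + 1) = bord h p p p := by
  unfold hank bord idx
  congr 1
  ext i j
  have hi : (if (i : ℕ) = p then p else (i : ℕ)) = i := by split_ifs with h <;> simp [h]
  have hj : (if (j : ℕ) = p then p else (j : ℕ)) = j := by split_ifs with h <;> simp [h]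
  simp only [Matrix.of_apply, hi, hj]

theorem desnanot {K : Type*} [Field K] (h : ℕ → K) (p : ℕ) (h0 : hank h p ≠ 0) :
    hank h (p + 2) * hank h p =
      bord h p p p * bord h p (p+1) (p+1) - bord h p p (p+1) * bord h p (p+1) p := by
  classical
  set A : Matrix (Fin p) (Fin p) K := Matrix.of fun i j => h ((i : ℕ) + (j : ℕ)) with hA
  have hdet : IsUnit A.det := isUnit_iff_ne_zero.mpr h0
  let _ : Invertible A := A.invertibleOfIsUnitDet hdet
  let S : ℕ → ℕ → K := fun e₁ e₂ => h (e₁ + e₂) -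
    ((Matrix.of fun (_ : Fin 1) (j : Fin p) => h (e₁ + j)) * ⅟A *
      (Matrix.of fun (i : Fin p) (_ : Fin 1) => h (i + e₂))) 0 0
  have hb : ∀ e₁ e₂, bord h p e₁ e₂ = A.det * S e₁ e₂ := by
    intro e₁ e₂
    unfold bord
    rw [← Matrix.det_submatrix_equiv_self (finSumFinEquiv (m := p) (n := 1))]
    have : (Matrix.submatrix (Matrix.of fun i j : Fin (p + 1) => h (idx p e₁ i + idx p e₂ j))
        (finSumFinEquiv (m := p) (n := 1)) (finSumFinEquiv (m := p) (n := 1))) =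
        Matrix.fromBlocks A (Matrix.of fun (i : Fin p) (_ : Fin 1) => h (i + e₂))
          (Matrix.of fun (_ : Fin 1) (j : Fin p) => h (e₁ + j))
          (Matrix.of fun (_ _ : Fin 1) => h (e₁ + e₂)) := by
      ext i j
      rcases i with i | i <;> rcases j with j | j <;>
        simp [idx, hA, (Fin.is_lt _).ne]
    rw [this, Matrix.det_fromBlocks₁₁, Matrix.det_fin_one]
    rfl
  have hh : hank h (p + 2) = A.det * (S p p * S (p+1) (p+1) - S p (p+1) * S (p+1) p) := by
    unfold hank
    rw [← Matrix.det_submatrix_equiv_self (finSumFinEquiv (m := p) (n := 2))]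
    have : (Matrix.submatrix (Matrix.of fun i j : Fin (p + 2) => h ((i : ℕ) + (j : ℕ)))
        (finSumFinEquiv (m := p) (n := 2)) (finSumFinEquiv (m := p) (n := 2))) =
        Matrix.fromBlocks A (Matrix.of fun (i : Fin p) (j : Fin 2) => h (i + (p + j)))
          (Matrix.of fun (i : Fin 2) (j : Fin p) => h ((p + i) + j))
          (Matrix.of fun (i j : Fin 2) => h ((p + i) + (p + j))) := by
      ext i j
      rcases i with i | i <;> rcases j with j | j <;> simp [hA]
    rw [this, Matrix.det_fromBlocks₁₁, Matrix.det_fin_two]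
    rfl
  have h2 : hank h p = A.det := rfl
  rw [hb, hb, hb, hb, hh, h2]
  ring

/-- Hankel determinant of derivatives of a polynomial. -/
def tau (f : ℝ[X]) (n : ℕ) : ℝ[X] := hank (fun k => derivative^[k] f) n

theorem derivative_bord (f : ℝ[X]) (p e : ℕ) :
    derivative (bord (fun k => derivative^[k] f) p e p) =
      bord (fun k => derivative^[k] f) p e (p + 1) := by
  unfold bord
  rw [derivative_det_col, Finset.sum_eq_single (Fin.last p)]
  · congr 1
    ext1 i j
    by_cases hj : j = Fin.last p
    · subst hj
      simp only [Matrix.updateCol_self, Matrix.of_apply, idx, Fin.val_last, if_true]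
      rw [← Function.iterate_succ_apply' derivative]
      rfl
    · rw [Matrix.updateCol_ne hj]
      have : (j : ℕ) ≠ p := fun h => hj (Fin.ext h)
      simp [idx, this]
  · intro j _ hj
    have hj' : (j : ℕ) < p := by
      have := j.is_lt
      have : (j : ℕ) ≠ p := fun h => hj (Fin.ext h)
      omega
    have hne : j ≠ (⟨j + 1, by omega⟩ : Fin (p + 1)) := by
      intro h; have := congrArg Fin.val h; simp at this
    refine Matrix.det_zero_of_column_eq hne fun i => ?_
    rw [Matrix.updateCol_self, Matrix.updateCol_ne hne.symm]
    simp only [Matrix.of_apply]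
    rw [← Function.iterate_succ_apply' derivative]
    congr 1
    simp only [idx]
    split_ifs <;> omega
  · simp

theorem toda (f : ℝ[X]) (p : ℕ) (h0 : tau f p ≠ 0) :
    tau f (p + 2) * tau f p = tau f (p + 1) * derivative (derivative (tau f (p + 1)))
      - derivative (tau f (p + 1)) ^ 2 := by
  have e1 : derivative (tau f (p + 1)) = bord (fun k => derivative^[k] f) p p (p + 1) := by
    rw [tau, hank_eq_bord, derivative_bord]
  have e2 : derivative (derivative (tau f (p + 1))) =
      bord (fun k => derivative^[k] f) p (p + 1) (p + 1) := by
    rw [e1, bord_symm, derivative_bord]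
  rw [e2, e1]
  let φ : ℝ[X] →+* FractionRing ℝ[X] := algebraMap _ _
  have inj : Function.Injective φ := IsFractionRing.injective ℝ[X] (FractionRing ℝ[X])
  have mh : ∀ n, φ (tau f n) = hank (fun k => φ (derivative^[k] f)) n := by
    intro n; unfold tau hank; rw [RingHom.map_det]; rfl
  have mb : ∀ a b, φ (bord (fun k => derivative^[k] f) p a b) =
      bord (fun k => φ (derivative^[k] f)) p a b := by
    intro a b; unfold bord; rw [RingHom.map_det]; rfl
  apply inj
  have := desnanot (fun k => φ (derivative^[k] f)) p (by
    rw [← mh]; intro h; exact h0 (inj (by rw [h, map_zero])))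
  rw [map_sub, map_mul, map_mul, map_pow, mh, mh, mb, mb, this, tau, hank_eq_bord, mb,
    bord_symm _ p (p+1) p]
  ring

theorem natDegree_hirota (t : ℝ[X]) (e : ℕ) (hd : t.natDegree = e + 1) :
    t * derivative (derivative t) - derivative t ^ 2 ≠ 0 ∧
      (t * derivative (derivative t) - derivative t ^ 2).natDegree = 2 * e := by
  have hl : t.coeff (e + 1) ≠ 0 := by
    rw [← hd]; exact leadingCoeff_ne_zero.mpr (by rintro rfl; simp at hd)
  have h1 : (derivative t).natDegree ≤ e := by
    have := natDegree_derivative_le t; omega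
  have h2 : (derivative (derivative t)).natDegree ≤ e - 1 := by
    have := natDegree_derivative_le (derivative t); omega
  have c1 : (derivative t).coeff e = t.coeff (e + 1) * (e + 1) := by rw [coeff_derivative]
  have csq : (derivative t ^ 2).coeff (2 * e) = (t.coeff (e + 1) * (e + 1)) ^ 2 := by
    rw [two_mul, sq, coeff_mul_add_eq_of_natDegree_le h1 h1, c1, sq]
  have cpr : (t * derivative (derivative t)).coeff (2 * e) =
      t.coeff (e + 1) ^ 2 * ((e + 1) * e) := by
    rcases e with _ | e
    · have : derivative (derivative t) = 0 := by
        rw [eq_C_of_natDegree_le_zero h1, derivative_C]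
      simp [this]
    · have : 2 * (e + 1) = (e + 2) + e := by ring
      rw [this, coeff_mul_add_eq_of_natDegree_le (by omega) (by simpa using h2), coeff_derivative,
        coeff_derivative]
      push_cast; ring
  have cc : (t * derivative (derivative t) - derivative t ^ 2).coeff (2 * e) ≠ 0 := by
    rw [coeff_sub, csq, cpr]
    have : t.coeff (e + 1) ^ 2 * (((e : ℝ) + 1) * e) - (t.coeff (e + 1) * ((e : ℝ) + 1)) ^ 2
      = - (t.coeff (e + 1) ^ 2 * ((e : ℝ) + 1)) := by ring
    rw [this]
    have : (e : ℝ) + 1 ≠ 0 := by positivity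
    exact neg_ne_zero.mpr (mul_ne_zero (pow_ne_zero _ hl) this)
  refine ⟨fun h => cc (by rw [h, coeff_zero]), le_antisymm ?_ (le_natDegree_of_ne_zero cc)⟩
  refine (natDegree_sub_le _ _).trans (max_le ?_ ?_)
  · rcases e with _ | e
    · have : derivative (derivative t) = 0 := by
        rw [eq_C_of_natDegree_le_zero h1, derivative_C]
      simp [this]
    · refine natDegree_mul_le.trans ?_
      rw [hd]; have h3 : (derivative (derivative t)).natDegree ≤ e := h2
      omega
  · refine natDegree_pow_le.trans ?_
    omega

theorem tau_zero (f : ℝ[X]) : tau f 0 = 1 := by simp [tau, hank]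
theorem tau_one (f : ℝ[X]) : tau f 1 = f := by simp [tau, hank]

theorem tau_deg (f : ℝ[X]) (hf : f ≠ 0) (k : ℕ) :
    (k ≤ f.natDegree + 1 → tau f k ≠ 0 ∧ (tau f k).natDegree = k * (f.natDegree + 1 - k)) ∧
    (k ≤ f.natDegree →
      tau f (k + 1) ≠ 0 ∧ (tau f (k + 1)).natDegree = (k + 1) * (f.natDegree - k)) := by
  induction k with
  | zero => simp [tau_zero, tau_one, hf]
  | succ k ih =>
    refine ⟨fun h => ?_, fun h => ?_⟩
    · have := ih.2 (by omega)
      rwa [Nat.add_sub_add_right]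
    · obtain ⟨a0, a1⟩ := ih.1 (by omega)
      obtain ⟨b0, b1⟩ := ih.2 (by omega)
      obtain ⟨s, hs⟩ : ∃ s, f.natDegree = k + 1 + s := ⟨_, (Nat.add_sub_of_le h).symm⟩
      have e1 : f.natDegree - k = s + 1 := by omega
      have e2 : f.natDegree + 1 - k = s + 2 := by omega
      have e3 : f.natDegree - (k + 1) = s := by omega
      rw [e1] at b1; rw [e2] at a1; rw [e3]
      obtain ⟨c0, c1⟩ := natDegree_hirota (tau f (k + 1)) (k * s + k + s) (by rw [b1]; ring)
      rw [← toda f k a0] at c0 c1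
      have d0 := left_ne_zero_of_mul c0
      refine ⟨d0, ?_⟩
      rw [natDegree_mul d0 a0, a1] at c1
      linarith

theorem tau_ne_zero (f : ℝ[X]) (hf : f ≠ 0) (k : ℕ) (hk : k ≤ f.natDegree + 1) : tau f k ≠ 0 :=
  ((tau_deg f hf k).1 hk).1

theorem E_ne_zero (F G : ℝ[X]) (hF : F ≠ 0) (hG : G ≠ 0) :
    F * G + derivative F * G - F * derivative G ≠ 0 := by
  intro h
  have h1 : F * G = F * derivative G - derivative F * G := by linear_combination h
  have h2 : (F * G).degree < (F * G).degree := by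
    conv_lhs => rw [h1]
    refine (degree_sub_le _ _).trans_lt (max_lt ?_ ?_)
    · rw [degree_mul, degree_mul]
      exact WithBot.add_lt_add_left (degree_ne_bot.mpr hF) (degree_derivative_lt hG)
    · rw [degree_mul, degree_mul]
      exact WithBot.add_lt_add_right (degree_ne_bot.mpr hG) (degree_derivative_lt hF)
  exact lt_irrefl _ h2

/-! Laguerre polynomials -/

def lagP (N : ℕ) (α : ℝ) : ℝ[X] :=
  ∑ k ∈ Finset.range (N + 1),
    C ((-1 : ℝ) ^ k * genBinom ((N : ℝ) + α) (N - k) / (Nat.factorial k)) * X ^ k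

theorem lagP_coeff (N : ℕ) (α : ℝ) (k : ℕ) : (lagP N α).coeff k =
    if k ≤ N then (-1 : ℝ) ^ k * genBinom ((N : ℝ) + α) (N - k) / (Nat.factorial k) else 0 := by
  simp [lagP, coeff_C_mul, coeff_X_pow]

theorem lagL_eq (N : ℕ) (α : ℝ) : lagL (N : ℤ) α = fun z => (lagP N α).eval z := by
  funext z
  simp only [lagL, lagP, eval_finsetSum]
  rw [if_neg (by omega)]
  simp only [Int.toNat_natCast, Int.cast_natCast, eval_mul, eval_C, eval_pow, eval_X]
  refine Finset.sum_congr rfl fun k _ => ?_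
  ring

theorem iteratedDeriv_poly (p : ℝ[X]) (k : ℕ) :
    iteratedDeriv k (fun z => p.eval z) = fun z => (derivative^[k] p).eval z := by
  induction k with
  | zero => simp
  | succ k ih =>
    rw [iteratedDeriv_succ, ih, Function.iterate_succ_apply']
    funext z
    exact Polynomial.deriv _

theorem genLag_eq (m : ℤ) (n N : ℕ) (μ z : ℝ) (h : m + n = N) :
    genLag m n μ z = (tau (lagP N (μ + 1)) n).eval z := by
  unfold genLag tau hank
  rw [h, lagL_eq, ← coe_evalRingHom, RingHom.map_det]
  congr 1
  ext i j
  simp [iteratedDeriv_poly]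

theorem genBinom_zero (x : ℝ) : genBinom x 0 = 1 := by simp [genBinom]

theorem genBinom_absorb (x : ℝ) (j : ℕ) :
    ((j : ℝ) + 1) * genBinom x (j + 1) = x * genBinom (x - 1) j := by
  unfold genBinom
  rw [Finset.prod_range_succ', Nat.factorial_succ]
  have : ∏ i ∈ Finset.range j, (x - ((i + 1 : ℕ) : ℝ)) = ∏ i ∈ Finset.range j, (x - 1 - i) :=
    Finset.prod_congr rfl fun i _ => by push_cast; ring
  rw [this]
  have h1 : (j : ℝ) + 1 ≠ 0 := by positivity
  have h2 : (Nat.factorial j : ℝ) ≠ 0 := by positivity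
  push_cast
  field_simp
  ring

theorem genBinom_pascal (x : ℝ) (j : ℕ) :
    genBinom x (j + 1) = genBinom (x - 1) (j + 1) + genBinom (x - 1) j := by
  have h1 : (j : ℝ) + 1 ≠ 0 := by positivity
  have h := genBinom_absorb x j
  have h3 : ((j : ℝ) + 1) * genBinom (x - 1) (j + 1) = (x - 1 - j) * genBinom (x - 1) j := by
    unfold genBinom
    rw [Finset.prod_range_succ, Nat.factorial_succ]
    have h2 : (Nat.factorial j : ℝ) ≠ 0 := by positivity
    push_cast
    field_simp
  apply mul_left_cancel₀ h1
  linear_combination h - h3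

theorem lagP_natDegree (N : ℕ) (α : ℝ) : (lagP N α).natDegree = N ∧ lagP N α ≠ 0 := by
  have h : (lagP N α).coeff N ≠ 0 := by
    rw [lagP_coeff, if_pos le_rfl, Nat.sub_self, genBinom_zero]
    simp [Nat.factorial_ne_zero]
  refine ⟨le_antisymm ?_ (le_natDegree_of_ne_zero h), fun h0 => h (by rw [h0, coeff_zero])⟩
  rw [natDegree_le_iff_coeff_eq_zero]
  intro k hk
  rw [lagP_coeff, if_neg (by omega)]

theorem lagP_rel1 (M : ℕ) (a : ℝ) :
    X * derivative (lagP (M + 1) a) =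
      C ((M : ℝ) + 1) * lagP (M + 1) a - C ((M : ℝ) + 1 + a) * lagP M a := by
  ext k
  rcases k with _ | k
  · simp only [coeff_sub, mul_coeff_zero, coeff_X_zero, zero_mul, lagP_coeff]
    have := genBinom_absorb ((M : ℝ) + 1 + a) M
    have e : (M : ℝ) + 1 + a - 1 = M + a := by ring
    rw [e] at this
    simp
    linear_combination -this
  · rw [coeff_X_mul, coeff_derivative, coeff_sub, coeff_C_mul, coeff_C_mul, lagP_coeff, lagP_coeff]
    by_cases h : k + 1 ≤ M
    · obtain ⟨s, rfl⟩ := Nat.exists_eq_add_of_le h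
      have := genBinom_absorb (((k + 1 + s : ℕ) : ℝ) + 1 + a) s
      have e : ((k + 1 + s : ℕ) : ℝ) + 1 + a - 1 = ((k + 1 + s : ℕ) : ℝ) + a := by ring
      rw [e] at this
      rw [if_pos (by omega), if_pos (by omega)]
      have e1 : k + 1 + s + 1 - (k + 1) = s + 1 := by omega
      have e2 : k + 1 + s - (k + 1) = s := by omega
      rw [e1, e2]
      push_cast at this ⊢
      have hf : (Nat.factorial (k+1) : ℝ) ≠ 0 := by positivity
      field_simp
      linear_combination -this
    · by_cases h' : k = M
      · subst h'
        simp
        ring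
      · rw [if_neg (by omega), if_neg (by omega)]
        simp

theorem lagP_rel2 (M : ℕ) (a : ℝ) :
    derivative (lagP (M + 1) a) = derivative (lagP M a) - lagP M a := by
  ext k
  rw [coeff_sub, coeff_derivative, coeff_derivative, lagP_coeff, lagP_coeff, lagP_coeff]
  have hf : (Nat.factorial k : ℝ) ≠ 0 := by positivity
  have hk : (k : ℝ) + 1 ≠ 0 := by positivity
  by_cases h : k + 1 ≤ M
  · obtain ⟨s, rfl⟩ := Nat.exists_eq_add_of_le h
    have := genBinom_pascal (((k + 1 + s : ℕ) : ℝ) + 1 + a) s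
    have e : ((k + 1 + s : ℕ) : ℝ) + 1 + a - 1 = ((k + 1 + s : ℕ) : ℝ) + a := by ring
    rw [e] at this
    rw [if_pos (by omega), if_pos (by omega), if_pos (by omega)]
    have e1 : k + 1 + s + 1 - (k + 1) = s + 1 := by omega
    have e2 : k + 1 + s - (k + 1) = s := by omega
    have e3 : k + 1 + s - k = s + 1 := by omega
    rw [e1, e2, e3, Nat.factorial_succ]
    push_cast at this ⊢
    field_simp
    rw [this]
    ring
  · by_cases h' : k = M
    · subst h'
      simp [genBinom_zero, Nat.factorial_succ]
      field_simp
      ring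
    · rw [if_neg (by omega), if_neg (by omega), if_neg (by omega)]
      simp

/-! Pure algebra: the two-dimensional dynamical system for the pair `(x, y)`, its conserved
expressions, and the Bäcklund step `(x, y) ↦ (X, Y)`. -/

theorem algA (x y z k N a x1 y1 : ℝ) (hz : z ≠ 0) (hd : y - x ≠ 0)
    (hx1 : x1 = (-(y-x)*(x+N+a) - z*x*(x+(k-1+a))/(y-x))/z)
    (hy1 : y1 = ((y-x)*(y-N) - z*y*(y+(k-1+a))/(y-x))/z) :
    z * (y1*(x+a)+y*x1+N*(y1-x1)-x1 - (((y*(x+(k-1+a)) + z*(y1*(x+(k-1+a))+y*x1))*(y-x)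
        - z*y*(x+(k-1+a))*(y1-x1))/(y-x)^2) + (k-1-N))
      - (y*(x+a)+N*(y-x)-x - z*y*(x+(k-1+a))/(y-x) - k*(k-1+a) + (k-1-N)*z)
     = (x+(k-1+a))*(k*(y-x)-x*(y-x-z))/(y-x) := by
  subst hx1 hy1
  field_simp
  ring

theorem algA' (x y z k N a x1 y1 : ℝ) (hz : z ≠ 0) (hd : y - x ≠ 0)
    (hx1 : x1 = (-(y-x)*(x+N+a) - z*x*(x+(k-1+a))/(y-x))/z)
    (hy1 : y1 = ((y-x)*(y-N) - z*y*(y+(k-1+a))/(y-x))/z) :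
    z * (y1*(x+a)+y*x1+N*(y1-x1)-x1 - (((y*(x+(k-1+a)) + z*(y1*(x+(k-1+a))+y*x1))*(y-x)
        - z*y*(x+(k-1+a))*(y1-x1))/(y-x)^2) + (k-1-N) - (y1 - x1) + 1)
      - (y*(x+a)+N*(y-x)-x - z*y*(x+(k-1+a))/(y-x) - k*(k-1+a) + (k-1-N)*z - (y-x) + z)
     = (y+(k-1+a))*(k*(y-x)-y*(y-x-z))/(y-x) := by
  subst hx1 hy1
  field_simp
  ring

theorem algc (x y z k N a X Y u v : ℝ) (hd : y - x ≠ 0)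
    (hu : u = k*(y-x)-x*(y-x-z)) (hv : v = k*(y-x)-y*(y-x-z)) (hu0 : u ≠ 0) (hv0 : v ≠ 0)
    (hX : X = (y-x-z)*(y/(y-x) - (N+k+a)*(y-x)/u))
    (hY : Y = (y-x-z)*(x/(y-x) + (k-N)*(y-x)/v)) :
    (Y - X) * v = (X+(k+a))*((y-x)*(y-x-z)) := by
  subst hX hY
  field_simp
  subst hu hv
  ring

theorem algc' (x y z k N a X Y u v : ℝ) (hd : y - x ≠ 0)
    (hu : u = k*(y-x)-x*(y-x-z)) (hv : v = k*(y-x)-y*(y-x-z)) (hu0 : u ≠ 0) (hv0 : v ≠ 0)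
    (hX : X = (y-x-z)*(y/(y-x) - (N+k+a)*(y-x)/u))
    (hY : Y = (y-x-z)*(x/(y-x) + (k-N)*(y-x)/v)) :
    (Y - X) * u = (Y+(k+a))*((y-x)*(y-x-z)) := by
  subst hX hY
  field_simp
  subst hu hv
  ring

theorem alge (x y z k N a X Y u v : ℝ) (hd : y - x ≠ 0)
    (hu : u = k*(y-x)-x*(y-x-z)) (hv : v = k*(y-x)-y*(y-x-z)) (hu0 : u ≠ 0) (hv0 : v ≠ 0)
    (hX : X = (y-x-z)*(y/(y-x) - (N+k+a)*(y-x)/u))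
    (hY : Y = (y-x-z)*(x/(y-x) + (k-N)*(y-x)/v)) :
    (y-x-z) + (y-x)*(y-x-z)*(X+N+a)/v + (y-x)*(y-x-z)*(Y-N)/u = Y - X := by
  subst hX hY
  field_simp
  subst hu hv
  ring

theorem algf (x y z k N a X Y u v : ℝ) (hd : y - x ≠ 0)
    (hu : u = k*(y-x)-x*(y-x-z)) (hv : v = k*(y-x)-y*(y-x-z)) (hu0 : u ≠ 0) (hv0 : v ≠ 0)
    (hX : X = (y-x-z)*(y/(y-x) - (N+k+a)*(y-x)/u))
    (hY : Y = (y-x-z)*(x/(y-x) + (k-N)*(y-x)/v)) (hD' : y-x-z ≠ 0) :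
    (Y*(X+a)+N*(Y-X)-X - z*Y*(v/((y-x)*(y-x-z))) - (k+1)*(k+a) + (k-N)*z) =
      (y*(x+a)+N*(y-x)-x - z*y*(x+(k-1+a))/(y-x) - k*(k-1+a) + (k-1-N)*z)
        + ((y-x)*(y-x-z)*(X+N+a)/v -a-2*k) := by
  subst hX hY
  field_simp
  subst hu hv
  ring

theorem algd (x y z k N a X u v x1 y1 u1 : ℝ) (hz : z ≠ 0) (hd : y - x ≠ 0)
    (hx1 : x1 = (-(y-x)*(x+N+a) - z*x*(x+(k-1+a))/(y-x))/z)
    (hy1 : y1 = ((y-x)*(y-N) - z*y*(y+(k-1+a))/(y-x))/z)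
    (hu : u = k*(y-x)-x*(y-x-z)) (hv : v = k*(y-x)-y*(y-x-z)) (hu0 : u ≠ 0) (hv0 : v ≠ 0)
    (hu1 : u1 = k*(y1-x1)-(x1*(y-x-z)+x*(y1-x1-1)))
    (hX : X = (y-x-z)*(y/(y-x) - (N+k+a)*(y-x)/u)) :
    z*u1/u - z*(y1-x1)/(y-x) - z*x/(y-x) = (y-x)*(y-x-z)*(X+N+a)/v := by
  subst hX hu1 hx1 hy1
  field_simp
  subst hu hv
  ring

theorem algd' (x y z k N a Y u v x1 y1 v1 : ℝ) (hz : z ≠ 0) (hd : y - x ≠ 0)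
    (hx1 : x1 = (-(y-x)*(x+N+a) - z*x*(x+(k-1+a))/(y-x))/z)
    (hy1 : y1 = ((y-x)*(y-N) - z*y*(y+(k-1+a))/(y-x))/z)
    (hu : u = k*(y-x)-x*(y-x-z)) (hv : v = k*(y-x)-y*(y-x-z)) (hu0 : u ≠ 0) (hv0 : v ≠ 0)
    (hv1 : v1 = k*(y1-x1)-(y1*(y-x-z)+y*(y1-x1-1)))
    (hY : Y = (y-x-z)*(x/(y-x) + (k-N)*(y-x)/v)) :
    z*v1/v - z*(y1-x1)/(y-x) - z*y/(y-x) = -(y-x)*(y-x-z)*(Y-N)/u := by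
  subst hY hv1 hx1 hy1
  field_simp
  subst hu hv
  ring

theorem alga (x y z k N a X Y u v x1 y1 u1 : ℝ) (hz : z ≠ 0) (hd : y - x ≠ 0)
    (hx1 : x1 = (-(y-x)*(x+N+a) - z*x*(x+(k-1+a))/(y-x))/z)
    (hy1 : y1 = ((y-x)*(y-N) - z*y*(y+(k-1+a))/(y-x))/z)
    (hu : u = k*(y-x)-x*(y-x-z)) (hv : v = k*(y-x)-y*(y-x-z)) (hu0 : u ≠ 0) (hv0 : v ≠ 0)
    (hu1 : u1 = k*(y1-x1)-(x1*(y-x-z)+x*(y1-x1-1)))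
    (hX : X = (y-x-z)*(y/(y-x) - (N+k+a)*(y-x)/u))
    (hY : Y = (y-x-z)*(x/(y-x) + (k-N)*(y-x)/v)) (hD' : y-x-z ≠ 0) :
    ((y1-x1-1)*(y/(y-x) - (N+k+a)*(y-x)/u) + (y-x-z)*((y1*(y-x)-y*(y1-x1))/(y-x)^2
        - ((N+k+a)*(y1-x1)*u - (N+k+a)*(y-x)*u1)/u^2))
      = (-(Y-X)*(X+N+a) - z*X*(v/((y-x)*(y-x-z))))/z := by
  subst hX hY hu1 hx1 hy1
  field_simp
  subst hu hv
  ring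

theorem algb (x y z k N a X Y u v x1 y1 v1 : ℝ) (hz : z ≠ 0) (hd : y - x ≠ 0)
    (hx1 : x1 = (-(y-x)*(x+N+a) - z*x*(x+(k-1+a))/(y-x))/z)
    (hy1 : y1 = ((y-x)*(y-N) - z*y*(y+(k-1+a))/(y-x))/z)
    (hu : u = k*(y-x)-x*(y-x-z)) (hv : v = k*(y-x)-y*(y-x-z)) (hu0 : u ≠ 0) (hv0 : v ≠ 0)
    (hv1 : v1 = k*(y1-x1)-(y1*(y-x-z)+y*(y1-x1-1)))
    (hX : X = (y-x-z)*(y/(y-x) - (N+k+a)*(y-x)/u))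
    (hY : Y = (y-x-z)*(x/(y-x) + (k-N)*(y-x)/v)) (hD' : y-x-z ≠ 0) :
    ((y1-x1-1)*(x/(y-x) + (k-N)*(y-x)/v) + (y-x-z)*((x1*(y-x)-x*(y1-x1))/(y-x)^2
        + ((k-N)*(y1-x1)*v - (k-N)*(y-x)*v1)/v^2))
      = ((Y-X)*(Y-N) - z*Y*(u/((y-x)*(y-x-z))))/z := by
  subst hX hY hv1 hx1 hy1
  field_simp
  subst hu hv
  ring

theorem algpv (q x z n N a q1 q2 x1 : ℝ) (hz : z ≠ 0) (hq : q ≠ 0) (hq1 : q - 1 ≠ 0)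
    (h1 : q1 = (q*(q-1)*(x+N+a) + (q-1)*(q*(x+(n+a))-(n+a)-N) - z*q)/z)
    (hx1 : x1 = (-(q-1)*(x+(n+a))*(x+N+a) - z*x/(q-1))/z)
    (h2 : z * q2 + q1 = (q1*(q-1)*(x+N+a)+q*q1*(x+N+a)+q*(q-1)*x1
      + q1*(q*(x+(n+a))-(n+a)-N) + (q-1)*(q1*(x+(n+a))+q*x1) - q - z*q1)) :
    q2 = (1 / (2 * q) + 1 / (q - 1)) * q1 ^ 2 - (1 / z) * q1
        + (q - 1) ^ 2 * (((N-n)^2/2) * q ^ 2 + (-(N+n+a)^2/2)) / (z ^ 2 * q)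
        + (a-1) * q / z - q * (q + 1) / (2 * (q - 1)) := by
  have h2' : q2 = ((q1*(q-1)*(x+N+a)+q*q1*(x+N+a)+q*(q-1)*x1
      + q1*(q*(x+(n+a))-(n+a)-N) + (q-1)*(q1*(x+(n+a))+q*x1) - q - z*q1) - q1)/z := by
    rw [eq_div_iff hz]; linear_combination h2
  clear h2
  subst h2' hx1 h1
  field_simp
  ring

/-- Logarithmic derivative of a polynomial. -/
def lf (p : ℝ[X]) (z : ℝ) : ℝ := (derivative p).eval z / p.eval z

/-- The Toda quotient. -/
def todaA (f : ℝ[X]) (j : ℕ) (z : ℝ) : ℝ :=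
  (tau f (j + 2)).eval z * (tau f j).eval z / (tau f (j + 1)).eval z ^ 2

theorem hasDerivAt_lf (f : ℝ[X]) (j : ℕ) (h0 : tau f j ≠ 0) (z : ℝ)
    (hz : (tau f (j + 1)).eval z ≠ 0) :
    HasDerivAt (lf (tau f (j + 1))) (todaA f j z) z := by
  have h1 := ((derivative (tau f (j + 1))).hasDerivAt z).div ((tau f (j + 1)).hasDerivAt z) hz
  have h2 := congrArg (eval z) (toda f j h0)
  simp only [eval_mul, eval_sub, eval_pow] at h2
  refine h1.congr_deriv ?_
  rw [todaA, h2]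
  ring

theorem hasDerivAt_todaA (f : ℝ[X]) (j : ℕ) (z : ℝ) (h0 : (tau f j).eval z ≠ 0)
    (h1 : (tau f (j + 1)).eval z ≠ 0) (h2 : (tau f (j + 2)).eval z ≠ 0) :
    HasDerivAt (todaA f j) (todaA f j z *
      (lf (tau f (j + 2)) z + lf (tau f j) z - 2 * lf (tau f (j + 1)) z)) z := by
  have h := (((tau f (j + 2)).hasDerivAt z).mul ((tau f j).hasDerivAt z)).div
    (((tau f (j + 1)).hasDerivAt z).pow 2) (pow_ne_zero 2 h1)
  refine h.congr_deriv ?_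
  simp only [todaA, lf]
  simp only [Pi.mul_apply, Pi.pow_apply]
  field_simp
  push_cast
  ring

theorem deriv_unique_on {U : Set ℝ} (hU : IsOpen U) {f g : ℝ → ℝ} {f' g' z : ℝ} (hz : z ∈ U)
    (h : ∀ t ∈ U, f t = g t) (hf : HasDerivAt f f' z) (hg : HasDerivAt g g' z) : f' = g' := by
  have : f =ᶠ[nhds z] g := Filter.eventuallyEq_of_mem (hU.mem_nhds hz) h
  exact (hf.congr_of_eventuallyEq this.symm).unique hg

/-- State of the induction. -/
structure Site (U : Set ℝ) (N a : ℝ) (f g : ℝ[X]) (j : ℕ) (x y : ℝ → ℝ) : Prop where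
  hx : ∀ z ∈ U, HasDerivAt x
    ((-(y z - x z)*(x z+N+a) - z*x z*(x z+(((j:ℝ)+1)-1+a))/(y z-x z))/z) z
  hy : ∀ z ∈ U, HasDerivAt y
    (((y z - x z)*(y z-N) - z*y z*(y z+(((j:ℝ)+1)-1+a))/(y z-x z))/z) z
  hd : ∀ z ∈ U, y z - x z ≠ 0
  hφ : ∀ z ∈ U, z * lf (tau f (j+1)) z =
    y z*(x z+a)+N*(y z-x z)-x z - z*y z*(x z+(((j:ℝ)+1)-1+a))/(y z-x z)
      - ((j:ℝ)+1)*(((j:ℝ)+1)-1+a) + (((j:ℝ)+1)-1-N)*z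
  hγ : ∀ z ∈ U, z * lf (tau g (j+1)) z =
    y z*(x z+a)+N*(y z-x z)-x z - z*y z*(x z+(((j:ℝ)+1)-1+a))/(y z-x z)
      - ((j:ℝ)+1)*(((j:ℝ)+1)-1+a) + (((j:ℝ)+1)-1-N)*z - (y z - x z) + z
  hψ : ∀ z ∈ U, z * (lf (tau f (j+1)) z - lf (tau f j) z) =
    (y z - x z)*(x z+N+a)/(x z+(((j:ℝ)+1)-1+a)) - a - 2 * j
  hχ : ∀ z ∈ U, z * (lf (tau g (j+1)) z - lf (tau g j) z) =
    -(y z - x z)*(y z-N)/(y z+(((j:ℝ)+1)-1+a)) + z - a - 2 * j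
  hq : ∀ z ∈ U, (tau f (j+1)).eval z * (tau g j).eval z * (x z+(((j:ℝ)+1)-1+a)) =
    (tau g (j+1)).eval z * (tau f j).eval z * (y z+(((j:ℝ)+1)-1+a))

theorem site_step {U : Set ℝ} (hU : IsOpen U) (hU0 : ∀ z ∈ U, z ≠ 0) {N a : ℝ} {f g : ℝ[X]}
    {j : ℕ} {x y : ℝ → ℝ} (S : Site U N a f g j x y)
    (hF0 : tau f j ≠ 0) (hG0 : tau g j ≠ 0)
    (hF : ∀ z ∈ U, ∀ i ≤ j + 2, (tau f i).eval z ≠ 0)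
    (hG : ∀ z ∈ U, ∀ i ≤ j + 2, (tau g i).eval z ≠ 0)
    (hE : ∀ z ∈ U, 1 + lf (tau f (j+2)) z - lf (tau g (j+2)) z ≠ 0) :
    ∃ X Y, Site U N a f g (j + 1) X Y := by
  set k : ℝ := (j : ℝ) + 1 with hk
  obtain ⟨hx, hy, hd, hφ, hγ, hψ, hχ, hq⟩ := S
  rw [← hk] at *
  let x1 : ℝ → ℝ := fun z => (-(y z - x z)*(x z+N+a) - z*x z*(x z+(k-1+a))/(y z-x z))/z
  let y1 : ℝ → ℝ := fun z => ((y z - x z)*(y z-N) - z*y z*(y z+(k-1+a))/(y z-x z))/z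
  let u : ℝ → ℝ := fun z => k*(y z-x z)-x z*(y z-x z-z)
  let v : ℝ → ℝ := fun z => k*(y z-x z)-y z*(y z-x z-z)
  let u1 : ℝ → ℝ := fun z => k*(y1 z-x1 z)-(x1 z*(y z-x z-z)+x z*(y1 z-x1 z-1))
  let v1 : ℝ → ℝ := fun z => k*(y1 z-x1 z)-(y1 z*(y z-x z-z)+y z*(y1 z-x1 z-1))
  let X : ℝ → ℝ := fun z => (y z-x z-z)*(y z/(y z-x z) - (N+k+a)*(y z-x z)/u z)
  let Y : ℝ → ℝ := fun z => (y z-x z-z)*(x z/(y z-x z) + (k-N)*(y z-x z)/v z)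
  have hx' : ∀ z ∈ U, HasDerivAt x (x1 z) z := hx
  have hy' : ∀ z ∈ U, HasDerivAt y (y1 z) z := hy
  have hdd : ∀ z ∈ U, HasDerivAt (fun t => y t - x t) (y1 z - x1 z) z :=
    fun z hz => (hy' z hz).sub (hx' z hz)
  have hDd : ∀ z ∈ U, HasDerivAt (fun t => y t - x t - t) (y1 z - x1 z - 1) z :=
    fun z hz => (hdd z hz).sub (hasDerivAt_id' z)
  have hud : ∀ z ∈ U, HasDerivAt u (u1 z) z := fun z hz =>
    ((hdd z hz).const_mul k).sub ((hx' z hz).mul (hDd z hz))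
  have hvd : ∀ z ∈ U, HasDerivAt v (v1 z) z := fun z hz =>
    ((hdd z hz).const_mul k).sub ((hy' z hz).mul (hDd z hz))
  -- derivative of the conserved expression
  have hCd : ∀ z ∈ U, HasDerivAt (fun z => y z*(x z+a)+N*(y z-x z)-x z
        - z*y z*(x z+(k-1+a))/(y z-x z) - k*(k-1+a) + (k-1-N)*z)
      (y1 z*(x z+a)+y z*x1 z+N*(y1 z-x1 z)-x1 z
        - (((y z*(x z+(k-1+a)) + z*(y1 z*(x z+(k-1+a))+y z*x1 z))*(y z-x z)
        - z*y z*(x z+(k-1+a))*(y1 z-x1 z))/(y z-x z)^2) + (k-1-N)) z := by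
    intro z hz
    have h := (((((hy' z hz).mul ((hx' z hz).add_const a)).add ((hdd z hz).const_mul N)).sub
      (hx' z hz)).sub (((((hasDerivAt_id' z).mul (hy' z hz)).mul
        ((hx' z hz).add_const (k-1+a))).div (hdd z hz) (hd z hz)))).sub_const (k*(k-1+a))
    have h2 := h.add ((hasDerivAt_id' z).const_mul (k-1-N))
    refine h2.congr_deriv ?_
    simp only [Pi.mul_apply]
    ring
  have hA : ∀ z ∈ U, z^2 * todaA f j z = (x z+(k-1+a))*u z/(y z-x z) := by
    intro z hz
    have h1 := deriv_unique_on hU hz hφ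
      ((hasDerivAt_id' z).mul (hasDerivAt_lf f j hF0 z (hF z hz _ (by omega)))) (hCd z hz)
    have h2 := algA (x z) (y z) z k N a (x1 z) (y1 z) (hU0 z hz) (hd z hz) rfl rfl
    rw [← h1, ← hφ z hz] at h2
    rw [← h2]; ring
  have hB : ∀ z ∈ U, z^2 * todaA g j z = (y z+(k-1+a))*v z/(y z-x z) := by
    intro z hz
    have h1 := deriv_unique_on hU hz hγ
      ((hasDerivAt_id' z).mul (hasDerivAt_lf g j hG0 z (hG z hz _ (by omega))))
      (((hCd z hz).sub (hdd z hz)).add (hasDerivAt_id' z))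
    have h2 := algA' (x z) (y z) z k N a (x1 z) (y1 z) (hU0 z hz) (hd z hz) rfl rfl
    rw [← h1, ← hγ z hz] at h2
    rw [← h2]; ring
  have hA0 : ∀ z ∈ U, todaA f j z ≠ 0 := fun z hz =>
    div_ne_zero (mul_ne_zero (hF z hz _ le_rfl) (hF z hz _ (by omega)))
      (pow_ne_zero _ (hF z hz _ (by omega)))
  have hB0 : ∀ z ∈ U, todaA g j z ≠ 0 := fun z hz =>
    div_ne_zero (mul_ne_zero (hG z hz _ le_rfl) (hG z hz _ (by omega)))
      (pow_ne_zero _ (hG z hz _ (by omega)))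
  have hxu : ∀ z ∈ U, (x z+(k-1+a)) ≠ 0 ∧ u z ≠ 0 := by
    intro z hz
    have h := mul_ne_zero (pow_ne_zero 2 (hU0 z hz)) (hA0 z hz)
    rw [hA z hz] at h
    have h' := (div_ne_zero_iff.mp h).1
    exact ⟨left_ne_zero_of_mul h', right_ne_zero_of_mul h'⟩
  have hyv : ∀ z ∈ U, (y z+(k-1+a)) ≠ 0 ∧ v z ≠ 0 := by
    intro z hz
    have h := mul_ne_zero (pow_ne_zero 2 (hU0 z hz)) (hB0 z hz)
    rw [hB z hz] at h
    have h' := (div_ne_zero_iff.mp h).1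
    exact ⟨left_ne_zero_of_mul h', right_ne_zero_of_mul h'⟩
  have hψ' : ∀ z ∈ U, z * (lf (tau f (j+2)) z - lf (tau f (j+1)) z) =
      (y z-x z)*(y z-x z-z)*(X z+N+a)/v z - a - 2*k := by
    intro z hz
    have hz0 := hU0 z hz
    have hd0 := hd z hz
    obtain ⟨hx0, hu0⟩ := hxu z hz
    obtain ⟨hy0, hv0⟩ := hyv z hz
    have h1 := deriv_unique_on hU hz hA
      ((hasDerivAt_pow 2 z).mul (hasDerivAt_todaA f j z (hF z hz _ (by omega))
        (hF z hz _ (by omega)) (hF z hz _ le_rfl)))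
      ((((hx' z hz).add_const (k-1+a)).mul (hud z hz)).div (hdd z hz) hd0)
    have h2 := algd (x z) (y z) z k N a (X z) (u z) (v z) (x1 z) (y1 z) (u1 z)
      hz0 hd0 rfl rfl rfl rfl hu0 hv0 rfl rfl
    rw [← h2]
    have hA1 : todaA f j z = (x z+(k-1+a))*u z/(y z-x z) / z^2 := by
      rw [← hA z hz]; field_simp
    simp only [Pi.mul_apply] at h1
    have h3 : z * (lf (tau f (j+2)) z + lf (tau f j) z - 2 * lf (tau f (j+1)) z) =
        z * x1 z / (x z+(k-1+a)) + z * u1 z / u z - z * (y1 z - x1 z) / (y z - x z) - 2 := by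
      generalize lf (tau f (j+2)) z + lf (tau f j) z - 2 * lf (tau f (j+1)) z = L at h1 ⊢
      rw [hA1] at h1
      generalize x1 z = p at h1 ⊢
      generalize y1 z = q at h1 ⊢
      generalize u1 z = r at h1 ⊢
      generalize u z = s at *
      push_cast at h1
      field_simp at h1 ⊢
      linear_combination h1
    have h4 : z * x1 z / (x z+(k-1+a)) =
        -(y z-x z)*(x z+N+a)/(x z+(k-1+a)) - z * x z/(y z-x z) := by
      simp only [x1]
      field_simp
    have h5 := hψ z hz
    have hj : (j : ℝ) = k - 1 := by rw [hk]; ring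
    rw [hj] at h5
    rw [h4] at h3
    linear_combination h3 + h5
  have hχ' : ∀ z ∈ U, z * (lf (tau g (j+2)) z - lf (tau g (j+1)) z) =
      -(y z-x z)*(y z-x z-z)*(Y z-N)/u z + z - a - 2*k := by
    intro z hz
    have hz0 := hU0 z hz
    have hd0 := hd z hz
    obtain ⟨hx0, hu0⟩ := hxu z hz
    obtain ⟨hy0, hv0⟩ := hyv z hz
    have h1 := deriv_unique_on hU hz hB
      ((hasDerivAt_pow 2 z).mul (hasDerivAt_todaA g j z (hG z hz _ (by omega))
        (hG z hz _ (by omega)) (hG z hz _ le_rfl)))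
      ((((hy' z hz).add_const (k-1+a)).mul (hvd z hz)).div (hdd z hz) hd0)
    have h2 := algd' (x z) (y z) z k N a (Y z) (u z) (v z) (x1 z) (y1 z) (v1 z)
      hz0 hd0 rfl rfl rfl rfl hu0 hv0 rfl rfl
    rw [← h2]
    have hA1 : todaA g j z = (y z+(k-1+a))*v z/(y z-x z) / z^2 := by
      rw [← hB z hz]; field_simp
    simp only [Pi.mul_apply] at h1
    have h3 : z * (lf (tau g (j+2)) z + lf (tau g j) z - 2 * lf (tau g (j+1)) z) =
        z * y1 z / (y z+(k-1+a)) + z * v1 z / v z - z * (y1 z - x1 z) / (y z - x z) - 2 := by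
      generalize lf (tau g (j+2)) z + lf (tau g j) z - 2 * lf (tau g (j+1)) z = L at h1 ⊢
      rw [hA1] at h1
      generalize x1 z = p at h1 ⊢
      generalize y1 z = q at h1 ⊢
      generalize v1 z = r at h1 ⊢
      generalize v z = s at *
      push_cast at h1
      field_simp at h1 ⊢
      linear_combination h1
    have h4 : z * y1 z / (y z+(k-1+a)) =
        (y z-x z)*(y z-N)/(y z+(k-1+a)) - z * y z/(y z-x z) := by
      simp only [y1]
      field_simp
    have h5 := hχ z hz
    have hj : (j : ℝ) = k - 1 := by rw [hk]; ring
    rw [hj] at h5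
    rw [h4] at h3
    linear_combination h3 + h5
  have hXY : ∀ z ∈ U, z * (1 + lf (tau f (j+2)) z - lf (tau g (j+2)) z) = Y z - X z := by
    intro z hz
    have h := alge (x z) (y z) z k N a (X z) (Y z) (u z) (v z) (hd z hz) rfl rfl
      (hxu z hz).2 (hyv z hz).2 rfl rfl
    rw [← h]
    linear_combination hψ' z hz - hχ' z hz + hφ z hz - hγ z hz
  have hD : ∀ z ∈ U, Y z - X z ≠ 0 := fun z hz => by
    rw [← hXY z hz]; exact mul_ne_zero (hU0 z hz) (hE z hz)
  have hc1 : ∀ z ∈ U, (Y z - X z) * v z = (X z+(k+a))*((y z-x z)*(y z-x z-z)) := fun z hz =>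
    algc (x z) (y z) z k N a (X z) (Y z) (u z) (v z) (hd z hz) rfl rfl
      (hxu z hz).2 (hyv z hz).2 rfl rfl
  have hc2 : ∀ z ∈ U, (Y z - X z) * u z = (Y z+(k+a))*((y z-x z)*(y z-x z-z)) := fun z hz =>
    algc' (x z) (y z) z k N a (X z) (Y z) (u z) (v z) (hd z hz) rfl rfl
      (hxu z hz).2 (hyv z hz).2 rfl rfl
  have hD' : ∀ z ∈ U, y z - x z - z ≠ 0 := by
    intro z hz h
    have := hc1 z hz
    rw [h, mul_zero, mul_zero] at this
    exact mul_ne_zero (hD z hz) (hyv z hz).2 this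
  have hr1 : ∀ z ∈ U, v z / ((y z-x z)*(y z-x z-z)) = (X z+(k+a)) / (Y z - X z) := by
    intro z hz
    rw [div_eq_div_iff (mul_ne_zero (hd z hz) (hD' z hz)) (hD z hz)]
    linear_combination hc1 z hz
  have hr2 : ∀ z ∈ U, u z / ((y z-x z)*(y z-x z-z)) = (Y z+(k+a)) / (Y z - X z) := by
    intro z hz
    rw [div_eq_div_iff (mul_ne_zero (hd z hz) (hD' z hz)) (hD z hz)]
    linear_combination hc2 z hz
  have hXn : ∀ z ∈ U, X z+(k+a) ≠ 0 := by
    intro z hz h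
    have := hc1 z hz
    rw [h, zero_mul] at this
    exact mul_ne_zero (hD z hz) (hyv z hz).2 this
  have hYn : ∀ z ∈ U, Y z+(k+a) ≠ 0 := by
    intro z hz h
    have := hc2 z hz
    rw [h, zero_mul] at this
    exact mul_ne_zero (hD z hz) (hxu z hz).2 this
  have hk' : ((j + 1 : ℕ) : ℝ) = k := by push_cast; rfl
  have hkk : k + 1 - 1 + a = k + a := by ring
  have hff : ∀ z ∈ U, z * lf (tau f (j+2)) z =
      Y z*(X z+a)+N*(Y z-X z)-X z - z*Y z*(X z+(k+a))/(Y z-X z)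
      - (k+1)*(k+a) + (k+1-1-N)*z := by
    intro z hz
    have h := algf (x z) (y z) z k N a (X z) (Y z) (u z) (v z) (hd z hz) rfl rfl
      (hxu z hz).2 (hyv z hz).2 rfl rfl (hD' z hz)
    rw [hr1 z hz] at h
    linear_combination hψ' z hz + hφ z hz - h
  refine ⟨X, Y, ?_, ?_, hD, ?_, ?_, ?_, ?_, ?_⟩
  · intro z hz
    rw [hk', hkk]
    have h1 := (hDd z hz).mul (((hy' z hz).div (hdd z hz) (hd z hz)).sub
      (((hdd z hz).const_mul (N+k+a)).div (hud z hz) (hxu z hz).2))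
    refine h1.congr_deriv ?_
    have h2 := alga (x z) (y z) z k N a (X z) (Y z) (u z) (v z) (x1 z) (y1 z) (u1 z)
      (hU0 z hz) (hd z hz) rfl rfl rfl rfl (hxu z hz).2 (hyv z hz).2 rfl rfl rfl (hD' z hz)
    rw [hr1 z hz, ← mul_div_assoc] at h2
    exact h2
  · intro z hz
    rw [hk', hkk]
    have h1 := (hDd z hz).mul (((hx' z hz).div (hdd z hz) (hd z hz)).add
      (((hdd z hz).const_mul (k-N)).div (hvd z hz) (hyv z hz).2))
    refine h1.congr_deriv ?_
    have h2 := algb (x z) (y z) z k N a (X z) (Y z) (u z) (v z) (x1 z) (y1 z) (v1 z)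
      (hU0 z hz) (hd z hz) rfl rfl rfl rfl (hxu z hz).2 (hyv z hz).2 rfl rfl rfl (hD' z hz)
    rw [hr2 z hz, ← mul_div_assoc] at h2
    exact h2
  · intro z hz
    rw [hk', hkk]
    exact hff z hz
  · intro z hz
    rw [hk', hkk]
    linear_combination hff z hz - hXY z hz
  · intro z hz
    rw [hk', hkk]
    have h := hψ' z hz
    have h2 : (y z-x z)*(y z-x z-z)*(X z+N+a)/v z = (Y z - X z)*(X z+N+a)/(X z+(k+a)) := by
      rw [div_eq_div_iff (hyv z hz).2 (hXn z hz)]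
      linear_combination -(X z+N+a) * hc1 z hz
    rw [h2] at h
    exact h
  · intro z hz
    rw [hk', hkk]
    have h := hχ' z hz
    have h2 : -(y z-x z)*(y z-x z-z)*(Y z-N)/u z = -(Y z - X z)*(Y z-N)/(Y z+(k+a)) := by
      rw [div_eq_div_iff (hxu z hz).2 (hYn z hz)]
      linear_combination (Y z-N) * hc2 z hz
    rw [h2] at h
    exact h
  · intro z hz
    rw [hk', hkk]
    have hz0 := hU0 z hz
    have hd0 := hd z hz
    have f0 := hF z hz j (by omega)
    have f1 := hF z hz (j+1) (by omega)
    have g0 := hG z hz j (by omega)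
    have g1 := hG z hz (j+1) (by omega)
    have e1 := hA z hz
    have e2 := hB z hz
    have e3 := hq z hz
    have e4 : v z * (Y z + (k+a)) = u z * (X z + (k+a)) := by
      apply mul_left_cancel₀ (mul_ne_zero (hd z hz) (hD' z hz))
      linear_combination - v z * hc2 z hz + u z * hc1 z hz
    unfold todaA at e1 e2
    generalize (tau f (j+2)).eval z = F2 at *
    generalize (tau g (j+2)).eval z = G2 at *
    generalize (tau f (j+1)).eval z = F1 at *
    generalize (tau g (j+1)).eval z = G1 at *
    generalize (tau f j).eval z = F0 at *
    generalize (tau g j).eval z = G0 at *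
    have k1 : F2 = (x z+(k-1+a))*u z/(y z-x z) * F1^2 / (z^2 * F0) := by
      rw [← e1]; field_simp
    have k2 : G2 = (y z+(k-1+a))*v z/(y z-x z) * G1^2 / (z^2 * G0) := by
      rw [← e2]; field_simp
    change F2 * G1 * (X z + (k+a)) = G2 * F1 * (Y z + (k+a))
    rw [k1, k2]
    generalize X z + (k+a) = XX at *
    generalize Y z + (k+a) = YY at *
    generalize x z + (k-1+a) = xx at *
    generalize y z + (k-1+a) = yy at *
    generalize u z = uu at *
    generalize v z = vv at *
    generalize y z - x z = dd at *
    field_simp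
    linear_combination uu * XX * e3 - G1 * F0 * yy * e4

theorem site_base {U : Set ℝ} (hU0 : ∀ z ∈ U, z ≠ 0) {N a : ℝ} {f g : ℝ[X]}
    (h1 : X * derivative f = C N * f - C (N + a) * g)
    (h2 : derivative f = derivative g - g)
    (hF : ∀ z ∈ U, f.eval z ≠ 0) (hG : ∀ z ∈ U, g.eval z ≠ 0)
    (hE : ∀ z ∈ U, 1 + lf f z - lf g z ≠ 0) :
    ∃ x y, Site U N a f g 0 x y := by
  let q : ℝ → ℝ := fun z => f.eval z / g.eval z
  let q1 : ℝ → ℝ := fun z => (-(N+a) + (2*N+a)*q z - N*(q z)^2 - z*q z)/z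
  let x : ℝ → ℝ := fun z => -(N+a)*(q z - 1)/q z
  let y : ℝ → ℝ := fun z => -N*(q z - 1)
  have e1 : ∀ z ∈ U, (derivative f).eval z = (N * f.eval z - (N+a) * g.eval z)/z := by
    intro z hz
    have := congrArg (eval z) h1
    simp only [eval_mul, eval_sub, eval_X, eval_C] at this
    rw [eq_div_iff (hU0 z hz)]
    linear_combination this
  have e2 : ∀ z ∈ U, (derivative g).eval z
      = (N * f.eval z - (N+a) * g.eval z)/z + g.eval z := by
    intro z hz
    have := congrArg (eval z) h2
    simp only [eval_sub] at this
    rw [← e1 z hz]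
    linear_combination -this
  have hq0 : ∀ z ∈ U, q z ≠ 0 := fun z hz => div_ne_zero (hF z hz) (hG z hz)
  have hqd : ∀ z ∈ U, HasDerivAt q (q1 z) z := by
    intro z hz
    have h := (f.hasDerivAt z).div (g.hasDerivAt z) (hG z hz)
    refine h.congr_deriv ?_
    rw [e1 z hz, e2 z hz]
    have := hU0 z hz
    have := hG z hz
    simp only [q1, q]
    field_simp
    ring
  have lF : ∀ z ∈ U, z * lf f z = N - (N+a)/q z := by
    intro z hz
    have := hU0 z hz
    have := hG z hz
    have := hF z hz
    rw [lf, e1 z hz]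
    simp only [q]
    field_simp
  have lG : ∀ z ∈ U, z * lf g z = N * q z - (N+a) + z := by
    intro z hz
    have := hU0 z hz
    have := hG z hz
    rw [lf, e2 z hz]
    simp only [q]
    field_simp
  have hδ : ∀ z ∈ U, y z - x z = z * (1 + lf f z - lf g z) := by
    intro z hz
    have := hq0 z hz
    have h3 : z * (1 + lf f z - lf g z) = z + z * lf f z - z * lf g z := by ring
    rw [h3, lF z hz, lG z hz]
    simp only [x, y]
    field_simp
    ring
  have hd : ∀ z ∈ U, y z - x z ≠ 0 := fun z hz => by
    rw [hδ z hz]; exact mul_ne_zero (hU0 z hz) (hE z hz)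
  have hdq : ∀ z ∈ U, y z - x z = (q z - 1) * (N + a - N * q z) / q z := by
    intro z hz
    have := hq0 z hz
    simp only [x, y]
    field_simp
    ring
  have hc : ∀ z ∈ U, q z - 1 ≠ 0 ∧ N + a - N * q z ≠ 0 := by
    intro z hz
    have h := hd z hz
    rw [hdq z hz] at h
    have h' := (div_ne_zero_iff.mp h).1
    exact ⟨left_ne_zero_of_mul h', right_ne_zero_of_mul h'⟩
  have hxa : ∀ z ∈ U, x z + a = (N + a - N * q z) / q z := by
    intro z hz
    have := hq0 z hz
    simp only [x]
    field_simp
    ring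
  have hya : ∀ z ∈ U, y z + a = N + a - N * q z := by
    intro z hz
    simp only [y]
    ring
  have t0 : ∀ p : ℝ[X], ∀ z, lf (tau p 0) z = 0 := by
    intro p z; simp [lf, tau_zero]
  have hν : (((0:ℕ):ℝ)+1)-1+a = a := by push_cast; ring
  have hFF : ∀ z ∈ U, z * lf (tau f (0+1)) z =
    y z*(x z+a)+N*(y z-x z)-x z - z*y z*(x z+(((0:ℕ):ℝ)+1-1+a))/(y z-x z)
      - (((0:ℕ):ℝ)+1)*((((0:ℕ):ℝ)+1)-1+a) + ((((0:ℕ):ℝ)+1)-1-N)*z := by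
    intro z hz
    rw [hν, zero_add, tau_one, lF z hz, hxa z hz, hdq z hz]
    have := hq0 z hz
    obtain ⟨c1, c2⟩ := hc z hz
    simp only [x, y]
    generalize q z = Q at *
    push_cast
    field_simp
    ring
  refine ⟨x, y, ?_, ?_, hd, hFF, ?_, ?_, ?_, ?_⟩
  · intro z hz
    have := hU0 z hz
    have hQ := hq0 z hz
    obtain ⟨c1, c2⟩ := hc z hz
    refine ((((hqd z hz).sub_const 1).const_mul (-(N+a))).div (hqd z hz) hQ).congr_deriv ?_
    rw [hν, hxa z hz, hdq z hz]
    simp only [x, q1]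
    generalize q z = Q at *
    field_simp
    ring
  · intro z hz
    have := hU0 z hz
    have hQ := hq0 z hz
    obtain ⟨c1, c2⟩ := hc z hz
    refine (((hqd z hz).sub_const 1).const_mul (-N)).congr_deriv ?_
    rw [hν, hya z hz, hdq z hz]
    simp only [y, q1]
    generalize q z = Q at *
    field_simp
    ring
  · intro z hz
    rw [← hFF z hz, hδ z hz, zero_add, tau_one, tau_one]
    ring
  · intro z hz
    rw [hν, t0, sub_zero, zero_add, tau_one, lF z hz, hxa z hz, hdq z hz]
    have hQ := hq0 z hz
    obtain ⟨c1, c2⟩ := hc z hz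
    simp only [x]
    generalize q z = Q at *
    push_cast
    field_simp
    ring
  · intro z hz
    rw [hν, t0, sub_zero, zero_add, tau_one, lG z hz, hya z hz, hdq z hz]
    have hQ := hq0 z hz
    obtain ⟨c1, c2⟩ := hc z hz
    simp only [y]
    generalize q z = Q at *
    push_cast
    field_simp
    ring
  · intro z hz
    rw [hν, zero_add, tau_one, tau_one, tau_zero, tau_zero, hxa z hz, hya z hz]
    have h3 : f.eval z = q z * g.eval z := (div_mul_cancel₀ _ (hG z hz)).symm
    rw [h3]
    have hQ := hq0 z hz
    simp only [eval_one]
    field_simp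

theorem site_all {U : Set ℝ} (hU : IsOpen U) (hU0 : ∀ z ∈ U, z ≠ 0) {N a : ℝ} {f g : ℝ[X]}
    (n : ℕ)
    (h1 : X * derivative f = C N * f - C (N + a) * g)
    (h2 : derivative f = derivative g - g)
    (hF0 : ∀ i ≤ n + 1, tau f i ≠ 0) (hG0 : ∀ i ≤ n + 1, tau g i ≠ 0)
    (hF : ∀ z ∈ U, ∀ i ≤ n + 1, (tau f i).eval z ≠ 0)
    (hG : ∀ z ∈ U, ∀ i ≤ n + 1, (tau g i).eval z ≠ 0)
    (hE : ∀ z ∈ U, ∀ i ≤ n + 1, 1 + lf (tau f i) z - lf (tau g i) z ≠ 0) :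
    ∀ j ≤ n, ∃ x y, Site U N a f g j x y := by
  intro j
  induction j with
  | zero =>
    intro _
    have e := tau_one f
    have e' := tau_one g
    apply site_base hU0 h1 h2
    · intro z hz; rw [← e]; exact hF z hz 1 (by omega)
    · intro z hz; rw [← e']; exact hG z hz 1 (by omega)
    · intro z hz; rw [← e, ← e']; exact hE z hz 1 (by omega)
  | succ j ih =>
    intro hj
    obtain ⟨x, y, S⟩ := ih (by omega)
    exact site_step hU hU0 S (hF0 j (by omega)) (hG0 j (by omega))
      (fun z hz i hi => hF z hz i (by omega)) (fun z hz i hi => hG z hz i (by omega))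
      (fun z hz => hE z hz _ (by omega))

theorem pv_on {U : Set ℝ} (hU : IsOpen U) (hU0 : ∀ z ∈ U, z ≠ 0) {N a : ℝ} {f g : ℝ[X]}
    {n : ℕ} {x y : ℝ → ℝ} (S : Site U N a f g n x y)
    (hF : ∀ z ∈ U, ∀ i ≤ n + 1, (tau f i).eval z ≠ 0)
    (hG : ∀ z ∈ U, ∀ i ≤ n + 1, (tau g i).eval z ≠ 0)
    (w w1 w2 : ℝ → ℝ)
    (hw : ∀ z ∈ U, w z = (tau g n).eval z * (tau f (n+1)).eval z /
      ((tau f n).eval z * (tau g (n+1)).eval z))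
    (hw1 : ∀ z ∈ U, HasDerivAt w (w1 z) z) (hw2 : ∀ z ∈ U, HasDerivAt w1 (w2 z) z) :
    ∀ z ∈ U, w2 z = (1 / (2 * w z) + 1 / (w z - 1)) * w1 z ^ 2 - (1 / z) * w1 z
        + (w z - 1) ^ 2 * (((N-n)^2/2) * w z ^ 2 + (-(N+n+a)^2/2)) / (z ^ 2 * w z)
        + (a-1) * w z / z - w z * (w z + 1) / (2 * (w z - 1)) := by
  obtain ⟨hx, hy, hd, hφ, hγ, hψ, hχ, hq⟩ := S
  have hν : ((n:ℝ)+1)-1+a = n + a := by ring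
  rw [hν] at hx hy hφ hγ hψ hχ hq
  have hw0 : ∀ z ∈ U, w z ≠ 0 := by
    intro z hz
    rw [hw z hz]
    exact div_ne_zero (mul_ne_zero (hG z hz _ (by omega)) (hF z hz _ le_rfl))
      (mul_ne_zero (hF z hz _ (by omega)) (hG z hz _ le_rfl))
  have hqq : ∀ z ∈ U, w z * (x z + (n+a)) = y z + (n+a) := by
    intro z hz
    have a1 := hF z hz n (by omega)
    have a2 := hG z hz (n+1) le_rfl
    have h := hq z hz
    rw [hw z hz]
    field_simp
    linear_combination h
  have hδ : ∀ z ∈ U, y z - x z = (w z - 1) * (x z + (n+a)) := by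
    intro z hz
    linear_combination -hqq z hz
  have hc : ∀ z ∈ U, w z - 1 ≠ 0 ∧ x z + (n+a) ≠ 0 := by
    intro z hz
    have h := hd z hz
    rw [hδ z hz] at h
    exact ⟨left_ne_zero_of_mul h, right_ne_zero_of_mul h⟩
  have hwl : ∀ z ∈ U, w1 z = w z * ((lf (tau f (n+1)) z - lf (tau f n) z)
      - (lf (tau g (n+1)) z - lf (tau g n) z)) := by
    intro z hz
    have a1 := hF z hz n (by omega)
    have a2 := hG z hz (n+1) le_rfl
    have a3 := hF z hz (n+1) le_rfl
    have a4 := hG z hz n (by omega)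
    have h := deriv_unique_on hU hz hw (hw1 z hz)
      ((((tau g n).hasDerivAt z).mul ((tau f (n+1)).hasDerivAt z)).div
        (((tau f n).hasDerivAt z).mul ((tau g (n+1)).hasDerivAt z)) (mul_ne_zero a1 a2))
    rw [h, hw z hz]
    simp only [lf, Pi.mul_apply]
    field_simp
    ring
  have hz1 : ∀ z ∈ U, z * w1 z = w z*(w z-1)*(x z+N+a)
      + (w z-1)*(w z*(x z+(n+a))-(n+a)-N) - z*w z := by
    intro z hz
    have h1 := hψ z hz
    have h2 := hχ z hz
    obtain ⟨c1, c2⟩ := hc z hz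
    have c0 := hw0 z hz
    have hyv : y z = w z * (x z + (n+a)) - (n+a) := by linear_combination -hqq z hz
    have h3 : (y z - x z)*(x z+N+a)/(x z+(n+a)) = (w z - 1)*(x z+N+a) := by
      rw [hδ z hz]; field_simp
    have h4 : -(y z - x z)*(y z-N)/(y z+(n+a)) = -(w z - 1)*(y z-N)/w z := by
      rw [← hqq z hz, hδ z hz]; field_simp
    have h5 : w z * (-(w z - 1)*(y z-N)/w z) = -(w z - 1)*(y z-N) := by field_simp
    rw [h3] at h1
    rw [h4] at h2
    rw [hwl z hz]
    have : z * (w z * ((lf (tau f (n+1)) z - lf (tau f n) z)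
      - (lf (tau g (n+1)) z - lf (tau g n) z))) =
      w z * (z * (lf (tau f (n+1)) z - lf (tau f n) z))
      - w z * (z * (lf (tau g (n+1)) z - lf (tau g n) z)) := by ring
    rw [this, h1, h2]
    rw [hyv] at h5 ⊢
    linear_combination -h5
  intro z hz
  have hz0 := hU0 z hz
  obtain ⟨c1, c2⟩ := hc z hz
  have hxd := hx z hz
  refine algpv (w z) (x z) z n N a (w1 z) (w2 z) _ hz0 (hw0 z hz) c1 ?_ rfl ?_
  · rw [eq_div_iff hz0]
    linear_combination hz1 z hz
  · have hxd' : HasDerivAt x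
        ((-(w z-1)*(x z+(n+a))*(x z+N+a) - z*x z/(w z-1))/z) z := by
      refine hxd.congr_deriv ?_
      rw [hδ z hz]
      field_simp
    have hW := hw1 z hz
    have h := deriv_unique_on hU hz hz1 ((hasDerivAt_id' z).mul (hw2 z hz))
      ((((hW.mul (hW.sub_const 1)).mul ((hxd'.add_const N).add_const a)).add
        ((hW.sub_const 1).mul (((hW.mul (hxd'.add_const (n+a))).sub_const (n+a)).sub_const N))).sub
        ((hasDerivAt_id' z).mul hW))
    simp only [Pi.mul_apply] at h
    linear_combination h

theorem pv_extend (A B : ℝ[X]) (P : ℝ[X]) (hP : P ≠ 0) (α β γ : ℝ)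
    (w : ℝ → ℝ) (hw : w = fun z => A.eval z / B.eval z)
    (hU : ∀ (w1 w2 : ℝ → ℝ), (∀ z, B.eval z ≠ 0 → HasDerivAt w (w1 z) z) →
      (∀ z, B.eval z ≠ 0 → HasDerivAt w1 (w2 z) z) → ∀ z, P.eval z ≠ 0 →
      w2 z = (1 / (2 * w z) + 1 / (w z - 1)) * w1 z ^ 2 - (1 / z) * w1 z
        + (w z - 1) ^ 2 * (α * w z ^ 2 + β) / (z ^ 2 * w z)
        + γ * w z / z - w z * (w z + 1) / (2 * (w z - 1)))
    (z : ℝ) (hz : z ≠ 0) (hB : B.eval z ≠ 0) (h0 : w z ≠ 0) (h1 : w z ≠ 1) :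
    PV α β γ w z := by
  let C1 : ℝ[X] := derivative A * B - A * derivative B
  let D1 : ℝ[X] := B ^ 2
  let w1 : ℝ → ℝ := fun t => C1.eval t / D1.eval t
  let w2 : ℝ → ℝ := fun t =>
    ((derivative C1).eval t * D1.eval t - C1.eval t * (derivative D1).eval t) / (D1.eval t) ^ 2
  have hD : ∀ t, B.eval t ≠ 0 → D1.eval t ≠ 0 := by
    intro t ht; simp only [D1, eval_pow]; exact pow_ne_zero _ ht
  have hw1 : ∀ t, B.eval t ≠ 0 → HasDerivAt w (w1 t) t := by
    intro t ht
    rw [hw]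
    refine ((A.hasDerivAt t).div (B.hasDerivAt t) ht).congr_deriv ?_
    simp only [w1, C1, D1, eval_sub, eval_mul, eval_pow]
  have hw2 : ∀ t, B.eval t ≠ 0 → HasDerivAt w1 (w2 t) t := fun t ht =>
    (C1.hasDerivAt t).div (D1.hasDerivAt t) (hD t ht)
  have hopen : ∀ᶠ t in nhds z, B.eval t ≠ 0 := B.continuous.continuousAt.eventually_ne hB
  have hderiv : deriv w =ᶠ[nhds z] w1 := hopen.mono fun t ht => (hw1 t ht).deriv
  have hd2 : iteratedDeriv 2 w z = w2 z := by
    rw [iteratedDeriv_succ, iteratedDeriv_one, hderiv.deriv_eq]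
    exact (hw2 z hB).deriv
  unfold PV
  rw [hd2, (hw1 z hB).deriv]
  have key := hU w1 w2 hw1 hw2
  have cw : ContinuousAt w z := (hw1 z hB).continuousAt
  have cw1 : ContinuousAt w1 z := (hw2 z hB).continuousAt
  have cw2 : ContinuousAt w2 z :=
    (((derivative C1).continuous.mul D1.continuous).sub
      (C1.continuous.mul (derivative D1).continuous)).continuousAt.div
      (D1.continuous.pow 2).continuousAt (pow_ne_zero 2 (hD z hB))
  have h1' : w z - 1 ≠ 0 := sub_ne_zero.mpr h1
  have cR : ContinuousAt (fun z => (1 / (2 * w z) + 1 / (w z - 1)) * w1 z ^ 2 - (1 / z) * w1 z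
        + (w z - 1) ^ 2 * (α * w z ^ 2 + β) / (z ^ 2 * w z)
        + γ * w z / z - w z * (w z + 1) / (2 * (w z - 1))) z := by
    have n1 : 2 * w z ≠ 0 := mul_ne_zero two_ne_zero h0
    have n2 : z ^ 2 * w z ≠ 0 := mul_ne_zero (pow_ne_zero 2 hz) h0
    have n3 : 2 * (w z - 1) ≠ 0 := mul_ne_zero two_ne_zero h1'
    fun_prop (disch := assumption)
  have hev : ∀ᶠ t in nhdsWithin z {z}ᶜ, P.eval t ≠ 0 := by
    have hfin : (P.rootSet ℝ).Finite := Polynomial.rootSet_finite P ℝ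
    have h2 : {t : ℝ | P.eval t = 0}.Finite := by
      refine hfin.subset fun t ht => ?_
      rw [Polynomial.mem_rootSet]
      exact ⟨hP, by simpa using ht⟩
    have h3 := (h2.subset (Set.sdiff_subset (t := {z}))).isClosed.isOpen_compl.mem_nhds
      (show z ∈ ({t : ℝ | P.eval t = 0} \ {z})ᶜ by simp)
    have h4 : ∀ᶠ t in nhds z, t ∈ ({t : ℝ | P.eval t = 0} \ {z})ᶜ := h3
    refine (h4.filter_mono nhdsWithin_le_nhds).mp ?_
    filter_upwards [self_mem_nhdsWithin] with t ht ht2 ht3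
    exact ht2 ⟨ht3, ht⟩
  have l1 := cw2.tendsto.mono_left (nhdsWithin_le_nhds (s := {z}ᶜ))
  have l2 := cR.tendsto.mono_left (nhdsWithin_le_nhds (s := {z}ᶜ))
  exact tendsto_nhds_unique (l1.congr' (hev.mono fun t ht => key t ht)) l2

/-- rational solutions of `P_V` in terms of `T_{m,n}^{(μ)}`. -/
theorem pv_rational_solution_genLag (m n : ℕ) (hm : 1 ≤ m) (hn : 1 ≤ n) (μ : ℝ) (w : ℝ → ℝ)
    (hw : w = fun z =>
      genLag ((m : ℤ) - 1) n μ z * genLag ((m : ℤ) - 1) (n + 1) μ z /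
        (genLag (m : ℤ) n μ z * genLag ((m : ℤ) - 2) (n + 1) μ z)) :
    ∀ z : ℝ, z ≠ 0 → genLag (m : ℤ) n μ z * genLag ((m : ℤ) - 2) (n + 1) μ z ≠ 0 →
      w z ≠ 0 → w z ≠ 1 →
      PV ((m : ℝ) ^ 2 / 2) (-((m : ℝ) + 2 * n + 1 + μ) ^ 2 / 2) μ w z := by
  obtain ⟨M, rfl⟩ : ∃ M, m = M + 1 := ⟨m - 1, by omega⟩
  intro z hz hden h0 h1
  set f : ℝ[X] := lagP (M + n + 1) (μ + 1) with hf
  set g : ℝ[X] := lagP (M + n) (μ + 1) with hg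
  have k1 : ∀ t, genLag (((M + 1 : ℕ) : ℤ) - 1) n μ t = (tau g n).eval t := fun t =>
    genLag_eq _ _ _ _ _ (by push_cast; ring)
  have k2 : ∀ t, genLag (((M + 1 : ℕ) : ℤ) - 1) (n + 1) μ t = (tau f (n + 1)).eval t := fun t =>
    genLag_eq _ _ _ _ _ (by push_cast; ring)
  have k3 : ∀ t, genLag ((M + 1 : ℕ) : ℤ) n μ t = (tau f n).eval t := fun t =>
    genLag_eq _ _ _ _ _ (by push_cast; ring)
  have k4 : ∀ t, genLag (((M + 1 : ℕ) : ℤ) - 2) (n + 1) μ t = (tau g (n + 1)).eval t := fun t =>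
    genLag_eq _ _ _ _ _ (by push_cast; ring)
  simp only [k1, k2, k3, k4] at hw hden
  obtain ⟨df, f0⟩ := lagP_natDegree (M + n + 1) (μ + 1)
  obtain ⟨dg, g0⟩ := lagP_natDegree (M + n) (μ + 1)
  rw [← hf] at df f0
  rw [← hg] at dg g0
  have hF0 : ∀ i ≤ n + 1, tau f i ≠ 0 := fun i hi => tau_ne_zero f f0 i (by omega)
  have hG0 : ∀ i ≤ n + 1, tau g i ≠ 0 := fun i hi => tau_ne_zero g g0 i (by omega)
  let Q : ℕ → ℝ[X] := fun i => tau f i * tau g i *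
    (tau f i * tau g i + derivative (tau f i) * tau g i - tau f i * derivative (tau g i))
  let P : ℝ[X] := X * ∏ i ∈ Finset.range (n + 2), Q i
  have hP : P ≠ 0 := by
    refine mul_ne_zero X_ne_zero (Finset.prod_ne_zero_iff.mpr fun i hi => ?_)
    have hi' : i ≤ n + 1 := by have := Finset.mem_range.mp hi; omega
    exact mul_ne_zero (mul_ne_zero (hF0 i hi') (hG0 i hi'))
      (E_ne_zero _ _ (hF0 i hi') (hG0 i hi'))
  let U : Set ℝ := {t | P.eval t ≠ 0}
  have hU : IsOpen U := isOpen_ne_fun P.continuous continuous_const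
  have hU0 : ∀ t ∈ U, t ≠ 0 := by
    intro t ht h
    apply ht
    simp [P, h]
  have hQ : ∀ t ∈ U, ∀ i ≤ n + 1, (Q i).eval t ≠ 0 := by
    intro t ht i hi h
    apply ht
    simp only [P, eval_mul, eval_prod]
    rw [Finset.prod_eq_zero (Finset.mem_range.mpr (by omega)) h, mul_zero]
  have hF : ∀ t ∈ U, ∀ i ≤ n + 1, (tau f i).eval t ≠ 0 := by
    intro t ht i hi h
    exact hQ t ht i hi (by simp [Q, h])
  have hG : ∀ t ∈ U, ∀ i ≤ n + 1, (tau g i).eval t ≠ 0 := by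
    intro t ht i hi h
    exact hQ t ht i hi (by simp [Q, h])
  have hE : ∀ t ∈ U, ∀ i ≤ n + 1, 1 + lf (tau f i) t - lf (tau g i) t ≠ 0 := by
    intro t ht i hi h
    apply hQ t ht i hi
    have a1 := hF t ht i hi
    have a2 := hG t ht i hi
    unfold lf at h
    simp only [Q, eval_mul, eval_add, eval_sub]
    field_simp at h
    rw [mul_eq_zero]
    right
    linear_combination h
  have r1 : X * derivative f = C ((M + n : ℕ) + 1 : ℝ) * f
      - C (((M + n : ℕ) + 1 : ℝ) + (μ + 1)) * g := lagP_rel1 (M + n) (μ + 1)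
  have r2 : derivative f = derivative g - g := lagP_rel2 (M + n) (μ + 1)
  obtain ⟨x, y, S⟩ := site_all hU hU0 n r1 r2 hF0 hG0 hF hG hE n le_rfl
  refine pv_extend (tau g n * tau f (n + 1)) (tau f n * tau g (n + 1)) P hP _ _ _ w
    (by rw [hw]; funext t; simp only [eval_mul]) ?_ z hz (by rw [eval_mul]; exact hden) h0 h1
  intro w1 w2 hw1 hw2 t ht
  have hBU : ∀ t ∈ U, (tau f n * tau g (n + 1)).eval t ≠ 0 := by
    intro t ht
    rw [eval_mul]
    exact mul_ne_zero (hF t ht n (by omega)) (hG t ht (n + 1) le_rfl)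
  have h := pv_on hU hU0 S hF hG w w1 w2 (fun t _ => by rw [hw])
    (fun t ht => hw1 t (hBU t ht)) (fun t ht => hw2 t (hBU t ht)) t ht
  rw [h]
  push_cast
  ring
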